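/- (Titchmarsh convolution theorem, half-line version) Let f, g ∈ L¹_ℂ(ℝ) with supp(f) ⊂ [0,∞) and supp(g) ⊂ [0,∞), and suppose [f*g](s) = ∫₀ˢ f(s−q)g(q) dq = 0 for almost all s ∈ [0,a], where a > 0. Then there exist nonnegative constants a₁, a₂ with a₁ + a₂ ≥ a such that f = 0 almost everywhere on [0,a₁] and g = 0 almost everywhere on [0,a₂]. -/

import Mathlib

/-!
After truncation `f` and `g` may be taken supported in `[0,a]`, so that their Laplace transforms
`F`, `G` are entire. For a function `h` supported in some `[0,b]`, vanishing a.e. below `c` is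
equivalent to `∫ e^{-xt} h(t) dt = O(e^{-cx})` for real `x ≥ 0`; the nontrivial direction
(`ae_zero_of_decay`) is Phragmén–Lindelöf plus Liouville.

Let `F_i` be the transform of `tⁱ f`, so that `F_i' = -F_{i+1}`, and likewise `G_j`. Let `c_n` be the
best rate `≤ a` at which every `F_i G_j` with `i + j ≤ n` decays. The hypothesis says `c_0 = a`.
The identity `(F_i G_{j+1})² = -(F_i G_{j+1})(F_i G_j)' - (F_i G_j)(F_{i+1} G_{j+1})` gives
`2 c_{n+1} ≥ c_n + c_{n+2}` (`midpoint_mem`). A concave sequence bounded below cannot decrease, so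
`c_n = a` for all `n`: every `f * (tⁿ g)` vanishes a.e. on `[0,a]` (`conv_pow_zero`).

Thus for a.e. `s < a` all moments of `q ↦ f(s-q) g(q)` vanish, hence `f(u) g(v) = 0` for almost all
`(u,v)` with `u + v < a`. Taking `a₁` to be the largest number in `[0,a]` below which `f` vanishes
a.e., this forces `g = 0` a.e. below `a₂ = a - a₁`.
-/

open MeasureTheory Set

namespace Titchmarsh

open Filter Topology Complex

/-- `h` is integrable and vanishes (everywhere, not just a.e.) off `[0,b]`. -/
def Supp (b : ℝ) (h : ℝ → ℂ) : Prop := Integrable h ∧ ∀ t, t ∉ Icc (0:ℝ) b → h t = 0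

/-- The Laplace transform `∫ e^{-zt} h(t) dt`, entire in `z` when `h` satisfies `Supp b h`. -/
noncomputable def LT (h : ℝ → ℂ) (z : ℂ) : ℂ := ∫ t : ℝ, exp (-z * t) * h t

/-- `φ(x) = O(e^{-cx})`, required only for real `x ≥ 0`. -/
def Decay (φ : ℂ → ℂ) (c : ℝ) : Prop :=
  ∃ C : ℝ, ∀ x : ℝ, 0 ≤ x → ‖φ x‖ ≤ C * Real.exp (-c * x)

/-- The convolution `s ↦ ∫ f(s-q) g(q) dq` over the whole line, with integrand written
`g q * f (s - q)`. -/
noncomputable def conv (f g : ℝ → ℂ) : ℝ → ℂ :=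
  convolution g f (ContinuousLinearMap.mul ℂ ℂ) volume

/-! ### Decay rates -/

lemma Decay.mono {φ : ℂ → ℂ} {c d : ℝ} (h : Decay φ c) (hd : d ≤ c) : Decay φ d := by
  obtain ⟨C, hC⟩ := h
  have hC0 : 0 ≤ C := by
    have := (norm_nonneg _).trans (hC 0 le_rfl)
    simpa using this
  refine ⟨C, fun x hx => (hC x hx).trans ?_⟩
  gcongr

lemma Decay.mul {φ ψ : ℂ → ℂ} {c d : ℝ} (h : Decay φ c) (h' : Decay ψ d) :
    Decay (fun z => φ z * ψ z) (c + d) := by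
  obtain ⟨C, hC⟩ := h
  obtain ⟨D, hD⟩ := h'
  refine ⟨C * D, fun x hx => ?_⟩
  rw [norm_mul]
  calc _ ≤ (C * Real.exp (-c * x)) * (D * Real.exp (-d * x)) :=
        mul_le_mul (hC x hx) (hD x hx) (norm_nonneg _) ((norm_nonneg _).trans (hC x hx))
    _ = _ := by
        rw [show -(c + d) * x = -c * x + -d * x by ring, Real.exp_add]; ring

lemma Decay.sub {φ ψ : ℂ → ℂ} {c : ℝ} (h : Decay φ c) (h' : Decay ψ c) :
    Decay (fun z => φ z - ψ z) c := by
  obtain ⟨C, hC⟩ := h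
  obtain ⟨D, hD⟩ := h'
  refine ⟨C + D, fun x hx => ?_⟩
  calc _ ≤ _ := norm_sub_le _ _
    _ ≤ _ := add_le_add (hC x hx) (hD x hx)
    _ = _ := by ring

lemma Decay.of_sq {φ : ℂ → ℂ} {c : ℝ} (h : Decay (fun z => φ z * φ z) c) :
    Decay φ (c / 2) := by
  obtain ⟨C, hC⟩ := h
  have hC0 : 0 ≤ C := by
    have := (norm_nonneg _).trans (hC 0 le_rfl)
    simpa using this
  refine ⟨√C, fun x hx => ?_⟩
  refine abs_le_of_sq_le_sq' ?_ (by positivity) |>.2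
  have h1 := hC x hx
  rw [norm_mul, ← sq] at h1
  refine h1.trans (le_of_eq ?_)
  rw [mul_pow, Real.sq_sqrt hC0, ← Real.exp_nat_mul]
  congr 2
  push_cast; ring

/-! ### Laplace transforms of compactly supported functions -/

lemma Supp.integrable_mul {b : ℝ} {h : ℝ → ℂ} (hh : Supp b h) {φ : ℝ → ℂ} (hφ : Continuous φ) :
    Integrable (fun t => φ t * h t) := by
  have h1 : IntegrableOn (fun t => φ t * h t) (Icc 0 b) :=
    hh.1.integrableOn.continuousOn_mul hφ.continuousOn isCompact_Icc
  refine (integrableOn_iff_integrable_of_support_subset ?_).1 h1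
  intro t ht
  by_contra h2
  exact ht (by simp [hh.2 t h2])

lemma Supp.mul {b : ℝ} {h : ℝ → ℂ} (hh : Supp b h) {φ : ℝ → ℂ} (hφ : Continuous φ) :
    Supp b (fun t => φ t * h t) :=
  ⟨hh.integrable_mul hφ, fun t ht => by simp [hh.2 t ht]⟩

lemma hasDerivAt_LT {b : ℝ} {h : ℝ → ℂ} (hh : Supp b h) (z : ℂ) :
    HasDerivAt (LT h) (-LT (fun t => t * h t) z) z := by
  have key := hasDerivAt_integral_of_dominated_loc_of_deriv_le (μ := volume)
    (F := fun (z : ℂ) (t : ℝ) => exp (-z * t) * h t) (x₀ := z)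
    (F' := fun (z : ℂ) (t : ℝ) => exp (-z * t) * (-t) * h t)
    (bound := fun t => Real.exp ((‖z‖ + 1) * b) * b * ‖h t‖)
    (s := Metric.ball z 1) (Metric.ball_mem_nhds z one_pos)
    (Eventually.of_forall fun w => (hh.integrable_mul (by fun_prop)).1)
    (hh.integrable_mul (by fun_prop))
    (hh.integrable_mul (φ := fun t => exp (-z * t) * (-t)) (by fun_prop)).1
    (Eventually.of_forall fun t w hw => ?_)
    (hh.1.norm.const_mul _)
    (Eventually.of_forall fun t w hw => ?_)
  · refine key.2.congr_deriv ?_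
    unfold LT
    rw [← integral_neg]
    congr 1; ext t; ring
  · by_cases ht : t ∈ Icc 0 b
    · rw [norm_mul, norm_mul, norm_exp, norm_neg, norm_real, Real.norm_eq_abs, abs_of_nonneg ht.1]
      have hw' : ‖w‖ ≤ ‖z‖ + 1 := by
        have : ‖w - z‖ < 1 := by simpa [dist_eq_norm] using hw
        have := norm_sub_norm_le w z
        linarith
      have h1 : (-w * t).re ≤ (‖z‖ + 1) * b := by
        calc (-w * t).re ≤ ‖-w * t‖ := re_le_norm _
          _ = ‖w‖ * t := by simp [abs_of_nonneg ht.1]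
          _ ≤ _ := mul_le_mul hw' ht.2 ht.1 (by positivity)
      have := ht.1
      gcongr
      exact ht.2
    · simp [hh.2 t ht]
  · have h1 : HasDerivAt (fun w : ℂ => -w * t) (-(t:ℂ)) w := by
      simpa using ((hasDerivAt_id w).neg.mul_const (t:ℂ))
    exact h1.cexp.mul_const _

/-- The easy half of the Paley–Wiener correspondence; `ae_zero_of_decay` is the converse. -/
lemma decay_LT {b c : ℝ} {h : ℝ → ℂ} (hh : Supp b h) (hc : ∀ᵐ t, t < c → h t = 0) :
    Decay (LT h) c := by
  refine ⟨∫ t, ‖h t‖, fun x hx => ?_⟩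
  rw [LT, mul_comm, ← integral_const_mul]
  refine (norm_integral_le_integral_norm _).trans ?_
  refine integral_mono_ae (hh.integrable_mul (by fun_prop)).norm (hh.1.norm.const_mul _) ?_
  filter_upwards [hc] with t ht
  by_cases htc : t < c
  · simp [ht htc]
  · rw [norm_mul, norm_exp]
    gcongr
    have : (-(x:ℂ) * t).re = - x * t := by simp
    rw [this]
    nlinarith

/-- Weierstrass: polynomials are dense in `C([0,b])`, so `h` is orthogonal to every test function. -/
lemma ae_zero_of_moments {b : ℝ} {h : ℝ → ℂ} (hh : Supp b h)
    (hm : ∀ n : ℕ, ∫ t : ℝ, (t:ℂ) ^ n * h t = 0) : ∀ᵐ t, h t = 0 := by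
  have hpoly : ∀ p : Polynomial ℝ, ∫ t : ℝ, ((p.eval t : ℝ) : ℂ) * h t = 0 := by
    intro p
    have h1 : ∀ t : ℝ, ((p.eval t : ℝ) : ℂ) * h t =
        ∑ i ∈ Finset.range (p.natDegree + 1), (p.coeff i : ℂ) * ((t:ℂ) ^ i * h t) := by
      intro t
      rw [Polynomial.eval_eq_sum_range]
      push_cast
      rw [Finset.sum_mul]
      exact Finset.sum_congr rfl fun i _ => by ring
    simp_rw [h1]
    rw [integral_finsetSum]
    · refine Finset.sum_eq_zero fun i _ => ?_
      rw [integral_const_mul, hm, mul_zero]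
    · intro i _
      exact (hh.integrable_mul (φ := fun t => (t:ℂ) ^ i) (by fun_prop)).const_mul _
  refine ae_eq_zero_of_integral_contDiff_smul_eq_zero hh.1.locallyIntegrable ?_
  intro φ hφ _
  rw [← norm_le_zero_iff]
  refine le_of_forall_pos_le_add fun ε hε => ?_
  set M := ∫ t, ‖h t‖ with hM
  have hM0 : 0 ≤ M := integral_nonneg fun _ => norm_nonneg _
  obtain ⟨p, hp⟩ := exists_polynomial_near_of_continuousOn 0 b φ hφ.continuous.continuousOn
    (ε / (M + 1)) (by positivity)
  have hφc : Continuous fun t => ((φ t : ℝ) : ℂ) := continuous_ofReal.comp hφ.continuous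
  have hpc : Continuous fun t : ℝ => ((p.eval t : ℝ) : ℂ) := continuous_ofReal.comp p.continuous
  have h2 : ∫ t, φ t • h t = ∫ t, ((φ t : ℂ) - (p.eval t : ℝ)) * h t := by
    simp_rw [sub_mul]
    rw [integral_sub (hh.integrable_mul hφc) (hh.integrable_mul hpc), hpoly, sub_zero]
    simp
  rw [h2]
  calc _ ≤ ∫ t, ‖((φ t : ℂ) - (p.eval t : ℝ)) * h t‖ := norm_integral_le_integral_norm _
    _ ≤ ∫ t, (ε / (M + 1)) * ‖h t‖ := by
        refine integral_mono (hh.integrable_mul (hφc.sub hpc)).norm (hh.1.norm.const_mul _) ?_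
        intro t
        by_cases ht : t ∈ Icc 0 b
        · simp only [norm_mul]
          gcongr
          rw [← ofReal_sub, norm_real, Real.norm_eq_abs, abs_sub_comm]
          exact (hp t ht).le
        · simp [hh.2 t ht]
    _ = ε / (M + 1) * M := by rw [integral_const_mul]
    _ ≤ 0 + ε := by
        rw [zero_add, div_mul_eq_mul_div, div_le_iff₀ (by positivity)]
        nlinarith

/-- Differentiating the transform `n` times at `0` gives the `n`-th moment up to sign. -/
lemma ae_zero_of_LT {b : ℝ} {h : ℝ → ℂ} (hh : Supp b h) (hz : ∀ z, LT h z = 0) :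
    ∀ᵐ t, h t = 0 := by
  have hall : ∀ n : ℕ, ∀ z, LT (fun t => (t:ℂ) ^ n * h t) z = 0 := by
    intro n
    induction n with
    | zero => simpa using hz
    | succ n ih =>
      intro z
      have hs : Supp b (fun t => (t:ℂ) ^ n * h t) :=
        hh.mul (φ := fun t => (t:ℂ) ^ n) (by fun_prop)
      have h1 := hasDerivAt_LT hs z
      rw [show LT (fun t => (t:ℂ) ^ n * h t) = fun _ => 0 from funext ih] at h1
      have h2 := h1.unique (hasDerivAt_const z (0:ℂ))
      rw [neg_eq_zero] at h2
      simpa [pow_succ', mul_assoc] using h2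
  refine ae_zero_of_moments hh fun n => ?_
  simpa [LT] using hall n 0

/-- The converse half of Paley–Wiener. With `k = h·1_{t<c}`, the entire function
`K(z) = e^{cz} LT k z = ∫ e^{z(c-t)} k(t) dt` is bounded for `Re z ≤ 0`, of exponential type, and
bounded on `[0,∞)` because `LT h` and `LT (h - k)` both decay like `e^{-cx}`. By Phragmén–Lindelöf
it is bounded on `Re z ≥ 0` too, so it is constant by Liouville, and it tends to `0` along the
negative integers. -/
lemma ae_zero_of_decay {b c : ℝ} {h : ℝ → ℂ} (hh : Supp b h) (hd : Decay (LT h) c) :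
    ∀ᵐ t, t < c → h t = 0 := by
  rcases lt_or_ge c 0 with hc | hc
  · exact Eventually.of_forall fun t ht => hh.2 t fun h' => by linarith [h'.1]
  set k : ℝ → ℂ := (Iio c).indicator h with hk
  have hks : Supp c k := by
    refine ⟨hh.1.indicator measurableSet_Iio, fun t ht => ?_⟩
    by_cases htc : t < c
    · rw [hk, indicator_of_mem (show t ∈ Iio c from htc)]
      refine hh.2 t fun h' => ht ⟨h'.1, htc.le⟩
    · exact indicator_of_notMem (show t ∉ Iio c from htc) _
  have hrs : Supp b (fun t => h t - k t) := by
    refine ⟨hh.1.sub hks.1, fun t ht => ?_⟩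
    have := hh.2 t ht
    simp only [hk, indicator]
    split_ifs <;> simp [this]
  have hrd : Decay (LT (fun t => h t - k t)) c := by
    refine decay_LT hrs (Eventually.of_forall fun t ht => ?_)
    rw [hk, indicator_of_mem (show t ∈ Iio c from ht), sub_self]
  have hkd : Decay (LT k) c := by
    have h1 := hd.sub hrd
    have h2 : (fun z => LT h z - LT (fun t => h t - k t) z) = LT k := by
      ext z
      rw [LT, LT, LT, ← integral_sub (hh.integrable_mul (by fun_prop))
        (hrs.integrable_mul (by fun_prop))]
      congr 1; ext t; ring
    rwa [h2] at h1
  set K : ℂ → ℂ := fun z => exp (z * c) * LT k z with hK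
  have hKint : ∀ z, K z = ∫ t : ℝ, exp (z * (c - t)) * k t := by
    intro z
    simp only [hK, LT]
    rw [← integral_const_mul]
    congr 1; ext t
    rw [← mul_assoc, ← exp_add]
    ring_nf
  have hKdiff : Differentiable ℂ K := by
    intro z
    have h1 := (hasDerivAt_LT hks z).differentiableAt
    fun_prop
  set M := ∫ t, ‖k t‖ with hM
  have hKb : ∀ z : ℂ, ∀ B : ℝ, (∀ t ∈ Icc 0 c, (z * (c - t)).re ≤ B) → ‖K z‖ ≤ Real.exp B * M := by
    intro z B hB
    rw [hKint, hM, ← integral_const_mul]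
    refine (norm_integral_le_integral_norm _).trans ?_
    refine integral_mono (hks.integrable_mul (by fun_prop)).norm (hks.1.norm.const_mul _) ?_
    intro t
    by_cases ht : t ∈ Icc 0 c
    · simp only [norm_mul, norm_exp]
      gcongr
      exact hB t ht
    · simp [hks.2 t ht]
  have hre : ∀ z : ℂ, ∀ t : ℝ, (z * (c - t)).re = z.re * (c - t) := by
    intro z t; simp
  have hKleft : ∀ z : ℂ, z.re ≤ 0 → ‖K z‖ ≤ M := by
    intro z hz
    have := hKb z 0 fun t ht => by
      rw [hre]; exact mul_nonpos_of_nonpos_of_nonneg hz (by linarith [ht.2])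
    simpa using this
  have hKright : ∀ z : ℂ, 0 ≤ z.re → ‖K z‖ ≤ M := by
    intro z hz
    refine PhragmenLindelof.right_half_plane_of_bounded_on_real hKdiff.diffContOnCl
      ⟨1, by norm_num, c, ?_⟩ ?_ ?_ hz
    · refine Asymptotics.IsBigO.of_bound M (Eventually.of_forall fun w => ?_)
      rw [Real.rpow_one, Real.norm_eq_abs, Real.abs_exp, mul_comm M]
      refine hKb w _ fun t ht => ?_
      rw [hre]
      calc w.re * (c - t) ≤ ‖w‖ * c :=
            mul_le_mul (re_le_norm w) (by linarith [ht.1]) (by linarith [ht.2]) (norm_nonneg _)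
        _ = _ := mul_comm _ _
    · obtain ⟨C, hC⟩ := hkd
      refine ⟨C, ?_⟩
      rw [eventually_map]
      filter_upwards [eventually_ge_atTop 0] with x hx
      rw [norm_mul, norm_exp]
      calc _ ≤ Real.exp ((x * c : ℂ)).re * (C * Real.exp (-c * x)) := by
            gcongr; exact hC x hx
        _ = C * (Real.exp (x * c) * Real.exp (-c * x)) := by
            simp; ring
        _ = C := by rw [← Real.exp_add]; ring_nf; simp
    · intro x
      exact hKleft _ (by simp)
  have hbdd : Bornology.IsBounded (range K) := by
    refine isBounded_iff_forall_norm_le.2 ⟨M, ?_⟩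
    rintro _ ⟨z, rfl⟩
    rcases le_total z.re 0 with hz | hz
    exacts [hKleft z hz, hKright z hz]
  have hlim : Tendsto (fun n : ℕ => K (-(n:ℂ))) atTop (𝓝 0) := by
    simp_rw [hKint]
    rw [show (0:ℂ) = ∫ t : ℝ, (0:ℂ) by simp]
    refine tendsto_integral_of_dominated_convergence (fun t => ‖k t‖) ?_ hks.1.norm ?_ ?_
    · exact fun n => (hks.integrable_mul (by fun_prop)).1
    · refine fun n => Eventually.of_forall fun t => ?_
      by_cases ht : t ∈ Icc 0 c
      · rw [norm_mul, norm_exp, hre]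
        refine mul_le_of_le_one_left (norm_nonneg _) (Real.exp_le_one_iff.2 ?_)
        simp only [neg_re, natCast_re]
        have := ht.2
        have : (0:ℝ) ≤ n * (c - t) := mul_nonneg (Nat.cast_nonneg n) (by linarith)
        linarith
      · simp [hks.2 t ht]
    · refine Eventually.of_forall fun t => ?_
      by_cases htc : t < c
      · rw [← zero_mul (k t)]
        refine Tendsto.mul_const _ ?_
        rw [tendsto_zero_iff_norm_tendsto_zero]
        simp_rw [norm_exp, hre]
        refine Real.tendsto_exp_atBot.comp ?_
        simp only [neg_re, natCast_re]
        exact (tendsto_neg_atTop_atBot.comp tendsto_natCast_atTop_atTop).atBot_mul_const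
          (by linarith)
      · have : k t = 0 := indicator_of_notMem (show t ∉ Iio c from htc) _
        simp [this]
  have hKz : ∀ z, K z = 0 := by
    intro z
    refine tendsto_nhds_unique ?_ hlim
    exact tendsto_const_nhds.congr fun n => hKdiff.apply_eq_apply_of_bounded hbdd z _
  have hkz : ∀ᵐ t, k t = 0 := ae_zero_of_LT hks fun z => by
    simpa [hK] using hKz z
  filter_upwards [hkz] with t ht htc
  rwa [hk, indicator_of_mem (show t ∈ Iio c from htc)] at ht

/-! ### Convolution -/

lemma supp_conv {b : ℝ} {f g : ℝ → ℂ} (hf : Supp b f) (hg : Supp b g) :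
    Supp (2 * b) (conv f g) := by
  refine ⟨hg.1.integrable_convolution _ hf.1, fun s hs => ?_⟩
  have : ∀ q : ℝ, g q * f (s - q) = 0 := by
    intro q
    by_cases hq : q ∈ Icc 0 b
    · rw [hf.2 (s - q) fun h' => hs ⟨by linarith [h'.1, hq.1], by linarith [h'.2, hq.2]⟩, mul_zero]
    · rw [hg.2 q hq, zero_mul]
  simp [conv, convolution_def, this]

lemma LT_conv {b : ℝ} {f g : ℝ → ℂ} (hf : Supp b f) (hg : Supp b g) (z : ℂ) :
    LT (conv f g) z = LT f z * LT g z := by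
  have h1 := integral_convolution (ContinuousLinearMap.mul ℂ ℂ) (μ := volume) (ν := volume)
    (hg.integrable_mul (φ := fun t => exp (-z * t)) (by fun_prop))
    (hf.integrable_mul (φ := fun t => exp (-z * t)) (by fun_prop))
  rw [LT, mul_comm (LT f z)]
  refine Eq.trans ?_ h1
  congr 1; ext s
  simp only [conv, convolution_def, ContinuousLinearMap.mul_apply']
  rw [← integral_const_mul]
  congr 1; ext q
  have : exp (-z * s) = exp (-z * q) * exp (-z * ((s - q : ℝ) : ℂ)) := by
    rw [← exp_add]; push_cast; ring_nf
  rw [this]; ring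

/-- The Laplace transform of `t ↦ tⁿ f(t)`, that is `(-1)ⁿ` times the `n`-th derivative of `LT f`. -/
noncomputable def F (f : ℝ → ℂ) (n : ℕ) : ℂ → ℂ := LT (fun t => (t:ℂ) ^ n * f t)

lemma Supp.pow {b : ℝ} {h : ℝ → ℂ} (hh : Supp b h) (n : ℕ) :
    Supp b (fun t => (t:ℂ) ^ n * h t) := hh.mul (φ := fun t => (t:ℂ) ^ n) (by fun_prop)

lemma hasDerivAt_F {b : ℝ} {h : ℝ → ℂ} (hh : Supp b h) (n : ℕ) (z : ℂ) :
    HasDerivAt (F h n) (-F h (n + 1) z) z := by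
  have := hasDerivAt_LT (hh.pow n) z
  simpa only [F, pow_succ', mul_assoc] using this

/-- Decay passes from `F_i G_j` to minus its derivative: the product is the transform of a convolution
vanishing below `c`, and multiplying that convolution by `t` keeps it zero there. -/
lemma decay_deriv {b c : ℝ} {f g : ℝ → ℂ} (hf : Supp b f) (hg : Supp b g) {i j : ℕ}
    (h : Decay (fun z => F f i z * F g j z) c) :
    Decay (fun z => F f (i + 1) z * F g j z + F f i z * F g (j + 1) z) c := by
  set u := conv (fun t => (t:ℂ) ^ i * f t) (fun t => (t:ℂ) ^ j * g t) with hu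
  have hus : Supp (2 * b) u := supp_conv (hf.pow i) (hg.pow j)
  have huLT : LT u = fun z => F f i z * F g j z := funext fun z => LT_conv (hf.pow i) (hg.pow j) z
  rw [← huLT] at h
  have h1 := ae_zero_of_decay hus h
  have h2 : Decay (LT (fun t => t * u t)) c := by
    refine decay_LT (hus.mul (φ := fun t => (t:ℂ)) (by fun_prop)) ?_
    filter_upwards [h1] with t ht htc
    rw [ht htc, mul_zero]
  convert h2 using 1
  ext z
  have h3 := hasDerivAt_LT hus z
  rw [huLT] at h3
  have h4 := h3.unique ((hasDerivAt_F hf i z).mul (hasDerivAt_F hg j z))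
  linear_combination h4

/-! ### Concavity of the decay rates -/

/-- The rates `c ∈ [0,a]` at which all products `F_i G_j` with `i + j ≤ n` decay. Restricting to `[0,a]`
keeps the supremum of this set meaningful. -/
def S (f g : ℝ → ℂ) (a : ℝ) (n : ℕ) : Set ℝ :=
  {c | 0 ≤ c ∧ c ≤ a ∧ ∀ i j, i + j ≤ n → Decay (fun z => F f i z * F g j z) c}

/-- The optimal decay rates are concave in `n`. Writing `D = F_{i+1} G_j + F_i G_{j+1}`, this rests on
`(F_i G_{j+1})² = (F_i G_{j+1}) · D - (F_i G_j)(F_{i+1} G_{j+1})`. -/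
lemma midpoint_mem {b a : ℝ} {f g : ℝ → ℂ} (hf : Supp b f) (hg : Supp b g) {n : ℕ} {c d : ℝ}
    (hc : c ∈ S f g a n) (hd : d ∈ S f g a (n + 2)) : (c + d) / 2 ∈ S f g a (n + 1) := by
  refine ⟨by linarith [hc.1, hd.1], by linarith [hc.2.1, hd.2.1], ?_⟩
  rcases le_total c d with hcd | hcd
  · intro i j hij
    exact (hd.2.2 i j (by lia)).mono (by linarith)
  have key : ∀ i j, i + j ≤ n → Decay (fun z => F f i z * F g (j + 1) z) ((c + d) / 2) := by
    intro i j hij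
    refine Decay.of_sq ?_
    have h1 := (decay_deriv hf hg (hc.2.2 i j hij)).mul (hd.2.2 i (j + 1) (by lia))
    have h2 := (hc.2.2 i j hij).mul (hd.2.2 (i + 1) (j + 1) (by lia))
    convert h1.sub h2 using 2
    ring
  intro i j hij
  rcases j with _ | j
  · rcases i with _ | i
    · exact (hc.2.2 0 0 (by lia)).mono (by linarith)
    -- `F_{i+1} G_0` is `F_{i+1} G_0 + F_i G_1` minus the product already treated.
    · have h1 := (decay_deriv hf hg (hc.2.2 i 0 (by lia))).mono (d := (c + d) / 2) (by linarith)
      convert h1.sub (key i 0 (by lia)) using 2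
      ring
  · exact key i j (by lia)

/-- A concave sequence that ever decreases would tend to `-∞`. -/
lemma concave_bounded (c : ℕ → ℝ) (h0 : ∀ n, 0 ≤ c n)
    (hc : ∀ n, c n + c (n + 2) ≤ 2 * c (n + 1)) (n : ℕ) : c 0 ≤ c n := by
  have hstep : ∀ n, c n ≤ c (n + 1) := by
    intro n
    by_contra! hlt
    have hd : ∀ k, c (n + k + 1) - c (n + k) ≤ c (n + 1) - c n := by
      intro k
      induction k with
      | zero => simp
      | succ k ih =>
        have := hc (n + k)
        rw [show n + (k + 1) + 1 = n + k + 2 by ring, show n + (k + 1) = n + k + 1 by ring]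
        linarith
    have hl : ∀ k : ℕ, c (n + k) ≤ c n + k * (c (n + 1) - c n) := by
      intro k
      induction k with
      | zero => simp
      | succ k ih =>
        have := hd k
        rw [show n + (k + 1) = n + k + 1 by ring]
        push_cast
        linarith
    obtain ⟨k, hk⟩ := exists_nat_gt (c n / (c n - c (n + 1)))
    rw [div_lt_iff₀ (by linarith)] at hk
    have := hl k
    have := h0 (n + k)
    nlinarith
  exact monotone_nat_of_le_succ hstep (Nat.zero_le n)

lemma ae_lt_of_forall {P : ℝ → Prop} {a : ℝ} (h : ∀ c < a, ∀ᵐ s : ℝ, s < c → P s) :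
    ∀ᵐ s : ℝ, s < a → P s := by
  have h1 : ∀ᵐ s : ℝ, ∀ n : ℕ, s < a - 1 / ((n:ℝ) + 1) → P s :=
    ae_all_iff.2 fun n => h _ (by have : 0 < 1 / ((n:ℝ) + 1) := by positivity
                                  linarith)
  filter_upwards [h1] with s hs hsa
  obtain ⟨n, hn⟩ := exists_nat_one_div_lt (sub_pos.2 hsa)
  exact hs n (by linarith)

/-- If `f * g` vanishes below `a`, so does `f * (tⁿ g)` for every `n`. -/
lemma conv_pow_zero {b a : ℝ} {f g : ℝ → ℂ} (ha : 0 < a) (hf : Supp b f) (hg : Supp b g)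
    (h : ∀ᵐ s, s < a → conv f g s = 0) (n : ℕ) :
    ∀ᵐ s, s < a → conv f (fun t => (t:ℂ) ^ n * g t) s = 0 := by
  have hne : ∀ m, 0 ∈ S f g a m := fun m => ⟨le_rfl, ha.le, fun i j _ => by
    have h1 := decay_LT (c := 0) (hf.pow i) (Eventually.of_forall fun t ht => by
      simp [hf.2 t fun h' => by linarith [h'.1]])
    have h2 := decay_LT (c := 0) (hg.pow j) (Eventually.of_forall fun t ht => by
      simp [hg.2 t fun h' => by linarith [h'.1]])
    simpa [F] using h1.mul h2⟩
  have hbd : ∀ m, BddAbove (S f g a m) := fun m => ⟨a, fun c hc => hc.2.1⟩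
  have ha0 : a ∈ S f g a 0 := by
    refine ⟨ha.le, le_rfl, fun i j hij => ?_⟩
    obtain ⟨rfl, rfl⟩ : i = 0 ∧ j = 0 := by lia
    have := decay_LT (supp_conv hf hg) h
    rw [funext (LT_conv hf hg)] at this
    simpa [F] using this
  have hconc := concave_bounded (fun m => sSup (S f g a m)) (fun m => le_csSup (hbd m) (hne m))
    (fun m => by
      have h1 : sSup (S f g a m) ≤ 2 * sSup (S f g a (m + 1)) - sSup (S f g a (m + 2)) := by
        refine csSup_le ⟨0, hne m⟩ fun c hc => ?_
        have h2 : sSup (S f g a (m + 2)) ≤ 2 * sSup (S f g a (m + 1)) - c := by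
          refine csSup_le ⟨0, hne _⟩ fun d hd => ?_
          have := le_csSup (hbd _) (midpoint_mem hf hg hc hd)
          linarith
        linarith
      linarith) n
  have han : a ≤ sSup (S f g a n) := (le_csSup (hbd 0) ha0).trans hconc
  refine ae_lt_of_forall fun c hc => ?_
  obtain ⟨d, hd, hcd⟩ := exists_lt_of_lt_csSup ⟨0, hne n⟩ (hc.trans_le han)
  refine ae_zero_of_decay (supp_conv hf (hg.pow n)) ?_
  rw [funext (LT_conv hf (hg.pow n))]
  simpa [F] using (hd.2.2 0 n (by lia)).mono hcd.le

/-! ### From vanishing moments to vanishing products -/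

/-- For almost every `s < a` all moments of `q ↦ g q * f (s - q)` vanish, hence so does this function.
The quantifiers are exchanged through Tonelli. -/
lemma ae_ae_mul_zero {b a : ℝ} {f g : ℝ → ℂ} (ha : 0 < a) (hf : Supp b f) (hg : Supp b g)
    (h : ∀ᵐ s, s < a → conv f g s = 0) :
    ∀ᵐ v, ∀ᵐ u, u < a - v → g v * f u = 0 := by
  have h1 : ∀ᵐ s, s < a → ∀ᵐ q, g q * f (s - q) = 0 := by
    have hall := ae_all_iff.2 (conv_pow_zero ha hf hg h)
    filter_upwards [hall, hg.1.ae_convolution_exists (ContinuousLinearMap.mul ℂ ℂ) hf.1]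
      with s hs hint hsa
    have hsupp : Supp b (fun q => g q * f (s - q)) :=
      ⟨hint, fun t ht => by simp [hg.2 t ht]⟩
    refine ae_zero_of_moments hsupp fun n => ?_
    rw [← hs n hsa]
    simp only [conv, convolution_def, ContinuousLinearMap.mul_apply', mul_assoc]
  have hmeas : AEMeasurable (Function.uncurry fun s q : ℝ => ‖g q * f (s - q)‖ₑ)
      ((volume.restrict (Iio a)).prod volume) := by
    have h2 := (hg.1.convolution_integrand (ContinuousLinearMap.mul ℂ ℂ) hf.1).1
    have hac : (volume.restrict (Iio a)).prod (volume : Measure ℝ) ≪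
        (volume : Measure ℝ).prod volume :=
      Measure.absolutelyContinuous_of_le Measure.restrict_le_self |>.prod
        Measure.AbsolutelyContinuous.rfl
    exact (h2.mono_ac hac).enorm
  have h4 := lintegral_lintegral_swap hmeas
  have h5 : ∫⁻ s in Iio a, ∫⁻ q, ‖g q * f (s - q)‖ₑ = 0 := by
    rw [← lintegral_zero (μ := volume.restrict (Iio a))]
    refine lintegral_congr_ae ?_
    rw [EventuallyEq, ae_restrict_iff' measurableSet_Iio]
    filter_upwards [h1] with s hs hsa
    rw [← lintegral_zero (μ := (volume : Measure ℝ))]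
    refine lintegral_congr_ae ?_
    filter_upwards [hs hsa] with q hq
    simp [hq]
  have h6 : AEMeasurable (fun v => ∫⁻ s in Iio a, ‖g v * f (s - v)‖ₑ) volume :=
    hmeas.prod_swap.lintegral_prod_right'
  rw [h5, eq_comm, lintegral_eq_zero_iff' h6] at h4
  filter_upwards [h4] with v hv
  have hm : AEMeasurable (fun s => ‖g v * f (s - v)‖ₑ) (volume.restrict (Iio a)) :=
    ((hf.1.comp_sub_right v).1.const_mul (g v)).enorm.restrict
  rw [Pi.zero_apply, lintegral_eq_zero_iff' hm, EventuallyEq,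
    ae_restrict_iff' measurableSet_Iio] at hv
  have h7 := (measurePreserving_add_right volume v).quasiMeasurePreserving.ae hv
  filter_upwards [h7] with u hu hua
  simpa using hu (show u + v < a by linarith)

lemma supp_truncate {a : ℝ} {f : ℝ → ℂ} (hf : Integrable f) :
    Supp a ((Icc 0 a).indicator f) :=
  ⟨hf.indicator measurableSet_Icc, fun _ ht => indicator_of_notMem ht _⟩

lemma conv_truncate {a s : ℝ} {f g : ℝ → ℂ} (hs : s ∈ Icc 0 a) :
    conv ((Icc 0 a).indicator f) ((Icc 0 a).indicator g) s =
      ∫ q in Ioc (0:ℝ) s, f (s - q) * g q := by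
  rw [← integral_Icc_eq_integral_Ioc, ← integral_indicator measurableSet_Icc]
  simp only [conv, convolution_def, ContinuousLinearMap.mul_apply']
  congr 1; ext q
  by_cases hq : q ∈ Icc 0 s
  · have h1 : q ∈ Icc 0 a := ⟨hq.1, hq.2.trans hs.2⟩
    have h2 : s - q ∈ Icc 0 a := ⟨by linarith [hq.2], by linarith [hq.1, hs.2]⟩
    rw [indicator_of_mem h1, indicator_of_mem h2, indicator_of_mem hq, mul_comm]
  · rw [indicator_of_notMem hq]
    by_cases h0 : 0 ≤ q
    · have h2 : s - q ∉ Icc 0 a := fun h' => hq ⟨h0, by linarith [h'.1]⟩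
      rw [indicator_of_notMem h2, mul_zero]
    · have h1 : q ∉ Icc 0 a := fun h' => h0 h'.1
      rw [indicator_of_notMem h1, zero_mul]

lemma ae_restrict_of_truncate {a c : ℝ} {f : ℝ → ℂ} (hca : c ≤ a)
    (h : ∀ᵐ t, t < c → (Icc 0 a).indicator f t = 0) :
    ∀ᵐ t ∂(volume.restrict (Icc (0:ℝ) c)), f t = 0 := by
  rw [ae_restrict_iff' measurableSet_Icc]
  filter_upwards [h, Measure.ae_ne volume c] with t ht htc htI
  have htA : t ∈ Icc 0 a := ⟨htI.1, htI.2.trans hca⟩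
  rw [← ht (lt_of_le_of_ne htI.2 htc), indicator_of_mem htA]

end Titchmarsh

/-- Titchmarsh convolution theorem (half-line version): if `f, g ∈ L¹_ℂ(ℝ)` are supported in
`[0,∞)` and their convolution vanishes a.e. on `[0,a]`, then `f` vanishes a.e. on `[0,a₁]` and
`g` a.e. on `[0,a₂]` for some nonnegative `a₁, a₂` with `a₁ + a₂ ≥ a`. -/
theorem stmt7 (f g : ℝ → ℂ) (hf : Integrable f) (hg : Integrable g)
    (hfs : ∀ t < (0:ℝ), f t = 0) (hgs : ∀ t < (0:ℝ), g t = 0)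
    (a : ℝ) (ha : 0 < a)
    (hconv : ∀ᵐ s ∂(volume.restrict (Icc (0:ℝ) a)),
      ∫ q in Ioc (0:ℝ) s, f (s - q) * g q = 0) :
    ∃ a₁ a₂ : ℝ, 0 ≤ a₁ ∧ 0 ≤ a₂ ∧ a ≤ a₁ + a₂ ∧
      (∀ᵐ t ∂(volume.restrict (Icc (0:ℝ) a₁)), f t = 0) ∧
      (∀ᵐ t ∂(volume.restrict (Icc (0:ℝ) a₂)), g t = 0) := by
  set f' := (Icc 0 a).indicator f
  set g' := (Icc 0 a).indicator g
  have hf' : Titchmarsh.Supp a f' := Titchmarsh.supp_truncate hf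
  have hg' : Titchmarsh.Supp a g' := Titchmarsh.supp_truncate hg
  have hc : ∀ᵐ s, s < a → Titchmarsh.conv f' g' s = 0 := by
    rw [ae_restrict_iff' measurableSet_Icc] at hconv
    filter_upwards [hconv] with s hs hsa
    by_cases h0 : 0 ≤ s
    · rw [Titchmarsh.conv_truncate ⟨h0, hsa.le⟩, hs ⟨h0, hsa.le⟩]
    · exact (Titchmarsh.supp_conv hf' hg').2 s fun h' => h0 h'.1
  have key := Titchmarsh.ae_ae_mul_zero ha hf' hg' hc
  set T : Set ℝ := {c | 0 ≤ c ∧ c ≤ a ∧ ∀ᵐ u, u < c → f' u = 0} with hT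
  have hT0 : (0:ℝ) ∈ T :=
    ⟨le_rfl, ha.le, Filter.Eventually.of_forall fun t ht => hf'.2 t fun h' => ht.not_ge h'.1⟩
  have hTb : BddAbove T := ⟨a, fun c hc => hc.2.1⟩
  have hTa : sSup T ≤ a := csSup_le ⟨0, hT0⟩ fun c hc => hc.2.1
  have hT0' : 0 ≤ sSup T := le_csSup hTb hT0
  refine ⟨sSup T, a - sSup T, hT0', by linarith, by linarith,
    Titchmarsh.ae_restrict_of_truncate hTa ?_,
    Titchmarsh.ae_restrict_of_truncate (sub_le_self a hT0') ?_⟩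
  · refine Titchmarsh.ae_lt_of_forall fun c hc => ?_
    obtain ⟨d, hd, hcd⟩ := exists_lt_of_lt_csSup ⟨0, hT0⟩ hc
    filter_upwards [hd.2.2] with u hu huc
    exact hu (huc.trans hcd)
  · filter_upwards [key] with v hv hva
    by_contra hne
    have hvI : v ∈ Icc 0 a := by
      by_contra hvn
      exact hne (hg'.2 v hvn)
    -- `g' v ≠ 0` forces `f'` to vanish below `a - v`, so `a - v ≤ sSup T`.
    have : a - v ∈ T := by
      refine ⟨by linarith [hvI.2], by linarith [hvI.1], ?_⟩
      filter_upwards [hv] with u hu hua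
      exact (mul_eq_zero.1 (hu hua)).resolve_left hne
    have := le_csSup hTb this
    linarith
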